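/- arXiv:1302.0804 — 2 statements merged into one kernel-verified Lean document; each statement's English description precedes it below -/
import Mathlib

section
/- Let A, B, C, D, D′ be points in 3-dimensional Euclidean space with D ≠ D′ such that all six pairwise distances among {A, B, C, D} equal ℓ > 0 and all six pairwise distances among {A, B, C, D′} equal ℓ (two regular tetrahedra sharing the face ABC, lying on opposite sides of its plane). Then the distance between the circumcenter of the tetrahedron ABCD and the circumcenter of the tetrahedron ABCD′ equals (√6/6)·ℓ. -/
open Real

lemma aux_top (T : Affine.Simplex ℝ (EuclideanSpace ℝ (Fin 3)) 3) :
    affineSpan ℝ (Set.range T.points) = ⊤ := by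
  apply (T.independent.affineSpan_eq_top_iff_card_eq_finrank_add_one).2
  simp

lemma aux_inner {E : Type*} [NormedAddCommGroup E] [InnerProductSpace ℝ E] (ℓ : ℝ)
    (a b c : E) (h1 : dist a b = ℓ) (h2 : dist a c = ℓ) (h3 : dist b c = ℓ) :
    inner ℝ (b - a) (c - a) = ℓ ^ 2 / 2 := by
  have h := norm_sub_sq_real (b - a) (c - a)
  rw [sub_sub_sub_cancel_right, ← dist_eq_norm, ← dist_eq_norm, ← dist_eq_norm, dist_comm b a,
    dist_comm c a, h1, h2, h3] at h
  linarith

lemma aux_self {E : Type*} [NormedAddCommGroup E] [InnerProductSpace ℝ E] (ℓ : ℝ)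
    (a b : E) (h1 : dist a b = ℓ) :
    inner ℝ (b - a) (b - a) = ℓ ^ 2 := by
  rw [real_inner_self_eq_norm_sq, ← dist_eq_norm, dist_comm, h1]

lemma aux_dist {E : Type*} [NormedAddCommGroup E] [InnerProductSpace ℝ E] (ℓ : ℝ)
    (a b c d : E) (h1 : dist a b = ℓ) (h2 : dist a c = ℓ) (h3 : dist a d = ℓ)
    (h4 : dist b c = ℓ) (h5 : dist b d = ℓ) (h6 : dist c d = ℓ) :
    dist a ((1 / 4 : ℝ) • (a + b + c + d)) = √(3 / 8 * ℓ ^ 2) := by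
  rw [dist_comm, dist_eq_norm]
  symm
  rw [Real.sqrt_eq_iff_mul_self_eq (by positivity) (by positivity), ← real_inner_self_eq_norm_mul_norm]
  have e : (1 / 4 : ℝ) • (a + b + c + d) - a = (1 / 4 : ℝ) • ((b - a) + (c - a) + (d - a)) := by
    module
  rw [e]
  simp only [inner_smul_left, inner_smul_right, inner_add_left, inner_add_right,
    aux_self ℓ a b h1, aux_self ℓ a c h2, aux_self ℓ a d h3,
    aux_inner ℓ a b c h1 h2 h4, aux_inner ℓ a b d h1 h3 h5, aux_inner ℓ a c d h2 h3 h6,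
    aux_inner ℓ a c b h2 h1 (by rw [dist_comm, h4]),
    aux_inner ℓ a d b h3 h1 (by rw [dist_comm, h5]),
    aux_inner ℓ a d c h3 h2 (by rw [dist_comm, h6])]
  simp
  ring

lemma aux_cc (ℓ : ℝ) (T : Affine.Simplex ℝ (EuclideanSpace ℝ (Fin 3)) 3)
    (hT : ∀ i j : Fin 4, i ≠ j → dist (T.points i) (T.points j) = ℓ) :
    T.circumcenter = (1 / 4 : ℝ) •
      (T.points 0 + T.points 1 + T.points 2 + T.points 3) := by
  symm
  refine T.eq_circumcenter_of_dist_eq (r := √(3 / 8 * ℓ ^ 2)) ?_ ?_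
  · rw [aux_top]; trivial
  · intro i
    fin_cases i
    · exact aux_dist ℓ _ _ _ _ (hT _ _ (by decide)) (hT _ _ (by decide)) (hT _ _ (by decide))
        (hT _ _ (by decide)) (hT _ _ (by decide)) (hT _ _ (by decide))
    · rw [show T.points 0 + T.points 1 + T.points 2 + T.points 3 =
        T.points 1 + T.points 0 + T.points 2 + T.points 3 by abel]
      exact aux_dist ℓ _ _ _ _ (hT _ _ (by decide)) (hT _ _ (by decide)) (hT _ _ (by decide))
        (hT _ _ (by decide)) (hT _ _ (by decide)) (hT _ _ (by decide))
    · rw [show T.points 0 + T.points 1 + T.points 2 + T.points 3 =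
        T.points 2 + T.points 0 + T.points 1 + T.points 3 by abel]
      exact aux_dist ℓ _ _ _ _ (hT _ _ (by decide)) (hT _ _ (by decide)) (hT _ _ (by decide))
        (hT _ _ (by decide)) (hT _ _ (by decide)) (hT _ _ (by decide))
    · rw [show T.points 0 + T.points 1 + T.points 2 + T.points 3 =
        T.points 3 + T.points 0 + T.points 1 + T.points 2 by abel]
      exact aux_dist ℓ _ _ _ _ (hT _ _ (by decide)) (hT _ _ (by decide)) (hT _ _ (by decide))
        (hT _ _ (by decide)) (hT _ _ (by decide)) (hT _ _ (by decide))

lemma aux_apex {E : Type*} [NormedAddCommGroup E] [InnerProductSpace ℝ E] (ℓ : ℝ) (hℓ : 0 < ℓ)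
    (b c d d' : E) (x y z : ℝ) (hd : d' = x • b + y • c + z • d) (hne : d ≠ d')
    (bb : inner ℝ b b = ℓ ^ 2) (cc : inner ℝ c c = ℓ ^ 2) (dd : inner ℝ d d = ℓ ^ 2)
    (bc : inner ℝ b c = ℓ ^ 2 / 2) (bd : inner ℝ b d = ℓ ^ 2 / 2) (cd : inner ℝ c d = ℓ ^ 2 / 2)
    (dd' : inner ℝ d' d' = ℓ ^ 2)
    (bd' : inner ℝ b d' = ℓ ^ 2 / 2) (cd' : inner ℝ c d' = ℓ ^ 2 / 2) :
    ‖d - d'‖ ^ 2 = 8 / 3 * ℓ ^ 2 := by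
  have cb : inner ℝ c b = ℓ ^ 2 / 2 := by rw [real_inner_comm, bc]
  have db : inner ℝ d b = ℓ ^ 2 / 2 := by rw [real_inner_comm, bd]
  have dc : inner ℝ d c = ℓ ^ 2 / 2 := by rw [real_inner_comm, cd]
  have hl : ℓ ^ 2 ≠ 0 := by positivity
  have e1 : x + y / 2 + z / 2 = 1 / 2 := by
    rw [hd] at bd'
    simp only [inner_smul_right, inner_add_right, bb, bc, bd] at bd'
    apply mul_left_cancel₀ hl
    linarith
  have e2 : x / 2 + y + z / 2 = 1 / 2 := by
    rw [hd] at cd'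
    simp only [inner_smul_right, inner_add_right, cb, cc, cd] at cd'
    apply mul_left_cancel₀ hl
    linarith
  have e3 : x ^ 2 + y ^ 2 + z ^ 2 + x * y + x * z + y * z = 1 := by
    rw [hd] at dd'
    simp only [inner_smul_left, inner_smul_right, inner_add_left, inner_add_right, bb, bc, bd,
      cb, cc, cd, db, dc, dd] at dd'
    simp at dd'
    apply mul_left_cancel₀ hl
    linarith
  have hy : y = (1 - z) / 3 := by linarith
  have hx : x = (1 - z) / 3 := by linarith
  subst hx hy
  have hz : (z - 1) * (z + 1) = 0 := by nlinarith
  rcases mul_eq_zero.1 hz with h | h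
  · obtain rfl : z = 1 := by linarith
    exact absurd (by rw [hd]; module) hne
  · obtain rfl : z = -1 := by linarith
    have e : d - d' = (2 : ℝ) • d - (2 / 3 : ℝ) • b - (2 / 3 : ℝ) • c := by
      rw [hd]; module
    rw [← real_inner_self_eq_norm_sq, e]
    simp only [inner_smul_left, inner_smul_right, inner_sub_left, inner_sub_right, bb, bc, bd,
      cb, cc, cd, db, dc, dd]
    simp
    ring

/-- Two regular tetrahedra of edge length `ℓ` sharing a face (with distinct
opposite vertices): the distance between their circumcenters equals `(√6/6)·ℓ`.
This is the length of the circumcentric-dual edge joining the circumcenters of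
two adjacent regular tetrahedra. -/
theorem adjacent_regular_tetrahedra_circumcenter_distance
    (ℓ : ℝ) (hℓ : 0 < ℓ)
    (T T' : Affine.Simplex ℝ (EuclideanSpace ℝ (Fin 3)) 3)
    (hT : ∀ i j : Fin 4, i ≠ j → dist (T.points i) (T.points j) = ℓ)
    (hT' : ∀ i j : Fin 4, i ≠ j → dist (T'.points i) (T'.points j) = ℓ)
    (hA : T.points 0 = T'.points 0)
    (hB : T.points 1 = T'.points 1)
    (hC : T.points 2 = T'.points 2)
    (hD : T.points 3 ≠ T'.points 3) :
    dist T.circumcenter T'.circumcenter = Real.sqrt 6 / 6 * ℓ := by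
  have hm : T'.points 3 ∈ affineSpan ℝ (Set.range T.points) := by rw [aux_top]; trivial
  obtain ⟨w, hw, hw'⟩ := eq_affineCombination_of_mem_affineSpan_of_fintype hm
  rw [Finset.affineCombination_eq_linear_combination _ _ _ hw] at hw'
  rw [Fin.sum_univ_four] at hw hw'
  have key := aux_apex ℓ hℓ (T.points 1 - T.points 0) (T.points 2 - T.points 0)
    (T.points 3 - T.points 0) (T'.points 3 - T.points 0) (w 1) (w 2) (w 3)
    (by
      rw [hw', show w 0 = 1 - w 1 - w 2 - w 3 by linarith]
      module)
    (fun h => hD (sub_left_injective h))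
    (aux_self ℓ _ _ (hT _ _ (by decide))) (aux_self ℓ _ _ (hT _ _ (by decide)))
    (aux_self ℓ _ _ (hT _ _ (by decide)))
    (aux_inner ℓ _ _ _ (hT _ _ (by decide)) (hT _ _ (by decide)) (hT _ _ (by decide)))
    (aux_inner ℓ _ _ _ (hT _ _ (by decide)) (hT _ _ (by decide)) (hT _ _ (by decide)))
    (aux_inner ℓ _ _ _ (hT _ _ (by decide)) (hT _ _ (by decide)) (hT _ _ (by decide)))
    (by rw [hA]; exact aux_self ℓ _ _ (hT' _ _ (by decide)))
    (by
      rw [hA, hB]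
      exact aux_inner ℓ _ _ _ (hT' _ _ (by decide)) (hT' _ _ (by decide)) (hT' _ _ (by decide)))
    (by
      rw [hA, hC]
      exact aux_inner ℓ _ _ _ (hT' _ _ (by decide)) (hT' _ _ (by decide)) (hT' _ _ (by decide)))
  rw [aux_cc ℓ T hT, aux_cc ℓ T' hT', ← hA, ← hB, ← hC, dist_eq_norm]
  rw [show (1 / 4 : ℝ) • (T.points 0 + T.points 1 + T.points 2 + T.points 3) -
    (1 / 4 : ℝ) • (T.points 0 + T.points 1 + T.points 2 + T'.points 3) =
    (1 / 4 : ℝ) • (T.points 3 - T.points 0 - (T'.points 3 - T.points 0)) by module, norm_smul]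
  rw [← sq_eq_sq₀ (by positivity) (by positivity), mul_pow, key, mul_pow, div_pow,
    Real.sq_sqrt (by norm_num)]
  norm_num
  ring
end

section
/- Let θ = arccos(1/3) and c₅ := (6√2/5)·((√2·600)/(3π²))^{2/3}·(2π − 5θ). Then 0.015 < c₅/2 − 1 < 0.025 (i.e., the 600-cell value of the simplicial Ricci component deviates from the continuum value 2 by about 2.0%). -/
open Real

lemma deficit_bounds : 0.12803 < 2 * π - 5 * Real.arccos (1 / 3) ∧
    2 * π - 5 * Real.arccos (1 / 3) < 0.1287 := by
  set θ := Real.arccos (1 / 3) with hθ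
  have hc : cos θ = 1 / 3 := Real.cos_arccos (by norm_num) (by norm_num)
  have h0 : 0 ≤ θ := Real.arccos_nonneg _
  have h1 : θ ≤ π := Real.arccos_le_pi _
  have hp := Real.pi_pos
  have hθ1 : π / 3 < θ := by
    by_contra! h
    have := Real.cos_le_cos_of_nonneg_of_le_pi h0 (by linarith) h
    rw [Real.cos_pi_div_three, hc] at this
    norm_num at this
  have hθ2 : θ < π / 2 := by
    by_contra! h
    have := Real.cos_le_cos_of_nonneg_of_le_pi (by linarith) h1 h
    rw [Real.cos_pi_div_two, hc] at this
    norm_num at this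
  have hs0 : 0 < sin θ := Real.sin_pos_of_pos_of_lt_pi (by linarith) (by linarith)
  have hs2 : sin θ ^ 2 = 8 / 9 := by
    have := Real.sin_sq_add_cos_sq θ
    rw [hc] at this
    linarith
  have hsin : sin (2 * π - 5 * θ) = 11 / 81 * sin θ := by
    rw [Real.sin_two_pi_sub, show 5 * θ = 3 * θ + 2 * θ by ring, Real.sin_add, Real.sin_two_mul,
      Real.cos_two_mul, Real.sin_three_mul, Real.cos_three_mul, hc,
      show sin θ ^ 3 = sin θ ^ 2 * sin θ by ring, hs2]
    ring
  have hsl : 0.9428 < sin θ := by nlinarith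
  have hsu : sin θ < 0.94281 := by nlinarith
  have hp3 := Real.pi_gt_three
  have hε : 0 < 2 * π - 5 * θ := by
    by_contra! h
    have := Real.sin_nonpos_of_nonpos_of_neg_pi_le h (by linarith)
    linarith
  constructor
  · have := Real.sin_lt hε
    linarith
  · by_contra! h
    have h2 := Real.sin_le_sin_of_le_of_le_pi_div_two (by linarith) (by linarith) h
    have h3 := Real.sin_gt_sub_cube (x := 0.1287) (by norm_num)
    rw [hsin] at h2
    norm_num at h2 h3
    linarith

lemma power_bounds : 9.36 < ((Real.sqrt 2 * 600) / (3 * π ^ 2)) ^ ((2 : ℝ) / 3) ∧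
    ((Real.sqrt 2 * 600) / (3 * π ^ 2)) ^ ((2 : ℝ) / 3) < 9.37 := by
  have hp := Real.pi_pos
  set x := (Real.sqrt 2 * 600) / (3 * π ^ 2) with hx
  have hx0 : 0 ≤ x := by positivity
  have hy : (x ^ ((2 : ℝ) / 3)) ^ 3 = 80000 / π ^ 4 := by
    rw [← Real.rpow_natCast, ← Real.rpow_mul hx0]
    norm_num
    rw [hx, div_pow, mul_pow, Real.sq_sqrt (by norm_num)]
    field_simp
    norm_num
  have hl : (3.1415 : ℝ) ^ 4 < π ^ 4 := by
    have := Real.pi_gt_d4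
    gcongr
  have hu : π ^ 4 < (3.1416 : ℝ) ^ 4 := by
    have := Real.pi_lt_d4
    gcongr
  have hp4 : 0 < π ^ 4 := by positivity
  constructor
  · apply lt_of_pow_lt_pow_left₀ 3 (by positivity)
    rw [hy, lt_div_iff₀ hp4]
    norm_num at *
    linarith
  · apply lt_of_pow_lt_pow_left₀ 3 (by norm_num)
    rw [hy, div_lt_iff₀ hp4]
    norm_num at *
    linarith

/-- The 600-cell (`p = 5`, `N = 600`) value of the simplicial Ricci component
deviates from the continuum value `2` by about 2.0%. -/
theorem six_hundred_cell_Ricci_deviation :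
    let θ : ℝ := Real.arccos (1 / 3)
    let c₅ : ℝ := (6 * Real.sqrt 2 / 5) *
      ((Real.sqrt 2 * 600) / (3 * π ^ 2)) ^ ((2 : ℝ) / 3) * (2 * π - 5 * θ)
    0.015 < c₅ / 2 - 1 ∧ c₅ / 2 - 1 < 0.025 := by
  intro θ c₅
  obtain ⟨he1, he2⟩ := deficit_bounds
  obtain ⟨hy1, hy2⟩ := power_bounds
  have hs1 : 1.4142 < Real.sqrt 2 := Real.lt_sqrt_of_sq_lt (by norm_num)
  have hs2 : Real.sqrt 2 < 1.4143 := (Real.sqrt_lt' (by norm_num)).2 (by norm_num)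
  have hl : (6 * 1.4142 / 5) * 9.36 * 0.12803 < c₅ := by
    simp only [c₅, θ]
    gcongr
  have hu : c₅ < (6 * 1.4143 / 5) * 9.37 * 0.1287 := by
    simp only [c₅, θ]
    have : 0 < 2 * π - 5 * Real.arccos (1 / 3) := by linarith
    gcongr
  norm_num at hl hu ⊢
  constructor <;> linarith
end
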